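/- arXiv:math/0111136 — 4 statements merged into one kernel-verified Lean document; each statement's English description precedes it below -/
import Mathlib

section
/- The function V(α, β) := Λ(α) + Λ(β) + Λ(π − α − β) is strictly concave on the open triangle T = {(α, β) ∈ ℝ² : α > 0, β > 0, α + β < π}. (This is the concavity part of Corollary 2.9: the volume of the ideal hyperbolic simplex, which equals Λ(α)+Λ(β)+Λ(γ) where α, β, γ are its interior dihedral angles with α+β+γ=π, is a concave function of the dihedral angles.) -/
/-- The Lobachevsky function `Λ(θ) = -∫₀^θ log |2 sin u| du`. -/
noncomputable def lobachevsky (θ : ℝ) : ℝ :=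
  -∫ u in (0:ℝ)..θ, Real.log |2 * Real.sin u|

lemma lob_hasDerivAt {θ : ℝ} (h0 : 0 < θ) (h1 : θ < Real.pi) :
    HasDerivAt lobachevsky (-Real.log (2 * Real.sin θ)) θ := by
  have hs : 0 < Real.sin θ := Real.sin_pos_of_pos_of_lt_pi h0 h1
  have hm : Measurable (fun u : ℝ => Real.log |2 * Real.sin u|) := by fun_prop
  have hint : IntervalIntegrable (fun u : ℝ => Real.log |2 * Real.sin u|)
      MeasureTheory.volume 0 θ := by
    have h : IntervalIntegrable (fun u : ℝ => Real.log 2 + Real.log (Real.sin u))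
        MeasureTheory.volume 0 θ :=
      (intervalIntegrable_const).add intervalIntegrable_log_sin
    refine h.congr ?_
    intro u hu
    rw [Set.uIoc_of_le h0.le] at hu
    have : 0 < Real.sin u := Real.sin_pos_of_pos_of_lt_pi hu.1 (by linarith [hu.2])
    simp only [Real.log_abs]
    rw [Real.log_mul (by norm_num) this.ne']
  have hc : ContinuousAt (fun u : ℝ => Real.log |2 * Real.sin u|) θ := by
    apply ContinuousAt.log
    · fun_prop
    · positivity
  have := (intervalIntegral.integral_hasDerivAt_right hint
    (hm.stronglyMeasurable.stronglyMeasurableAtFilter) hc).neg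
  rw [Real.log_abs] at this
  exact this

lemma quad_neg {A B a b : ℝ} (hA : 0 < A) (hB : 0 < B) (hAB : A + B < Real.pi)
    (hab : a ≠ 0 ∨ b ≠ 0) :
    0 < a ^ 2 * (Real.cos A / Real.sin A) + b ^ 2 * (Real.cos B / Real.sin B)
      - (a + b) ^ 2 * (Real.cos (A + B) / Real.sin (A + B)) := by
  have h1 : 0 < Real.sin A := Real.sin_pos_of_pos_of_lt_pi hA (by linarith)
  have h2 : 0 < Real.sin B := Real.sin_pos_of_pos_of_lt_pi hB (by linarith)
  have h3 : 0 < Real.sin (A + B) := Real.sin_pos_of_pos_of_lt_pi (by linarith) hAB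
  have key : a ^ 2 * (Real.cos A / Real.sin A) + b ^ 2 * (Real.cos B / Real.sin B)
      - (a + b) ^ 2 * (Real.cos (A + B) / Real.sin (A + B)) =
      ((a * Real.sin B - b * Real.cos (A + B) * Real.sin A) ^ 2
        + (b * Real.sin A * Real.sin (A + B)) ^ 2) /
        (Real.sin A * Real.sin B * Real.sin (A + B)) := by
    field_simp
    have e1 : Real.sin (A + B) * Real.cos A - Real.cos (A + B) * Real.sin A = Real.sin B := by
      rw [← Real.sin_sub]; congr 1; ring
    have e2 : Real.sin (A + B) * Real.cos B - Real.cos (A + B) * Real.sin B = Real.sin A := by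
      rw [← Real.sin_sub]; congr 1; ring
    have e3 := Real.sin_sq_add_cos_sq (A + B)
    linear_combination a ^ 2 * Real.sin B * e1 + b ^ 2 * Real.sin A * e2
      - b ^ 2 * Real.sin A ^ 2 * e3
  rw [key]
  apply div_pos _ (by positivity)
  by_cases hb : b = 0
  · have ha : a ≠ 0 := by tauto
    subst hb
    simp only [zero_mul, sub_zero]
    positivity
  · positivity

lemma segment_concave (p q a b : ℝ) (hab : a ≠ 0 ∨ b ≠ 0)
    (h : ∀ t ∈ Set.Icc (0:ℝ) 1, 0 < p + t * a ∧ 0 < q + t * b ∧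
      (p + t * a) + (q + t * b) < Real.pi) :
    StrictConcaveOn ℝ (Set.Icc (0:ℝ) 1) (fun t => lobachevsky (p + t * a)
      + lobachevsky (q + t * b) + lobachevsky (Real.pi - (p + t * a) - (q + t * b))) := by
  have dl : ∀ (p a t : ℝ), HasDerivAt (fun t : ℝ => p + t * a) a t := fun p a t => by
    simpa using ((hasDerivAt_id t).mul_const a).const_add p
  have d1 : ∀ t ∈ Set.Icc (0:ℝ) 1, HasDerivAt (fun t => lobachevsky (p + t * a)
      + lobachevsky (q + t * b) + lobachevsky (Real.pi - (p + t * a) - (q + t * b)))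
      (-Real.log (2 * Real.sin (p + t * a)) * a + -Real.log (2 * Real.sin (q + t * b)) * b
        + -Real.log (2 * Real.sin ((p + t * a) + (q + t * b))) * (-a - b)) t := by
    intro t ht
    obtain ⟨h1, h2, h3⟩ := h t ht
    have k3 := (lob_hasDerivAt (θ := Real.pi - (p + t * a) - (q + t * b))
      (by linarith) (by linarith)).comp t (((dl p a t).const_sub Real.pi).sub (dl q b t))
    rw [sub_sub, Real.sin_pi_sub] at k3
    exact (((lob_hasDerivAt h1 (by linarith)).comp t (dl p a t)).add
      ((lob_hasDerivAt h2 (by linarith)).comp t (dl q b t))).add k3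
  have ds : ∀ (f : ℝ → ℝ) (f' t : ℝ), HasDerivAt f f' t → 0 < Real.sin (f t) →
      HasDerivAt (fun t => -Real.log (2 * Real.sin (f t)))
        (-(f' * (Real.cos (f t) / Real.sin (f t)))) t := by
    intro f f' t hf hs
    refine ((hf.sin.const_mul 2).log (by positivity)).neg.congr_deriv ?_
    field_simp
  have d2 : ∀ t ∈ Set.Icc (0:ℝ) 1, HasDerivAt (fun t =>
      -Real.log (2 * Real.sin (p + t * a)) * a + -Real.log (2 * Real.sin (q + t * b)) * b
        + -Real.log (2 * Real.sin ((p + t * a) + (q + t * b))) * (-a - b))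
      (-(a ^ 2 * (Real.cos (p + t * a) / Real.sin (p + t * a))
        + b ^ 2 * (Real.cos (q + t * b) / Real.sin (q + t * b))
      - (a + b) ^ 2 * (Real.cos ((p + t * a) + (q + t * b)) /
        Real.sin ((p + t * a) + (q + t * b))))) t := by
    intro t ht
    obtain ⟨h1, h2, h3⟩ := h t ht
    have s1 := Real.sin_pos_of_pos_of_lt_pi h1 (by linarith)
    have s2 := Real.sin_pos_of_pos_of_lt_pi h2 (by linarith)
    have s3 := Real.sin_pos_of_pos_of_lt_pi (add_pos h1 h2) h3
    have k := ((((ds _ _ t (dl p a t) s1).mul_const a).add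
      ((ds _ _ t (dl q b t) s2).mul_const b)).add
      ((ds _ _ t ((dl p a t).add (dl q b t)) s3).mul_const (-a - b)))
    refine k.congr_deriv ?_
    simp only [Pi.add_apply]
    ring
  apply StrictAntiOn.strictConcaveOn_of_deriv (convex_Icc 0 1)
  · exact fun t ht => (d1 t ht).continuousAt.continuousWithinAt
  · have : StrictAntiOn (fun t =>
      -Real.log (2 * Real.sin (p + t * a)) * a + -Real.log (2 * Real.sin (q + t * b)) * b
        + -Real.log (2 * Real.sin ((p + t * a) + (q + t * b))) * (-a - b)) (Set.Icc (0:ℝ) 1) := by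
      apply strictAntiOn_of_deriv_neg (convex_Icc 0 1)
      · exact fun t ht => (d2 t ht).continuousAt.continuousWithinAt
      · intro t ht
        have ht' := interior_subset ht
        rw [(d2 t ht').deriv]
        obtain ⟨h1, h2, h3⟩ := h t ht'
        exact neg_neg_of_pos (quad_neg h1 h2 h3 hab)
    exact (this.mono interior_subset).congr
      fun t ht => ((d1 t (interior_subset ht)).deriv).symm

/-- The volume `V(α,β) = Λ(α) + Λ(β) + Λ(π - α - β)` of the ideal hyperbolic simplex
is strictly concave on the open triangle `{α > 0, β > 0, α + β < π}`. -/
theorem volume_strictConcaveOn :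
    StrictConcaveOn ℝ
      {p : ℝ × ℝ | 0 < p.1 ∧ 0 < p.2 ∧ p.1 + p.2 < Real.pi}
      (fun p : ℝ × ℝ =>
        lobachevsky p.1 + lobachevsky p.2 + lobachevsky (Real.pi - p.1 - p.2)) := by
  have hconv : Convex ℝ {p : ℝ × ℝ | 0 < p.1 ∧ 0 < p.2 ∧ p.1 + p.2 < Real.pi} := by
    have e : {p : ℝ × ℝ | 0 < p.1 ∧ 0 < p.2 ∧ p.1 + p.2 < Real.pi} =
        {p : ℝ × ℝ | 0 < p.1} ∩ ({p : ℝ × ℝ | 0 < p.2} ∩ {p : ℝ × ℝ | p.1 + p.2 < Real.pi}) := rfl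
    rw [e]
    refine (convex_halfSpace_gt (LinearMap.fst ℝ ℝ ℝ).isLinear 0).inter
      ((convex_halfSpace_gt (LinearMap.snd ℝ ℝ ℝ).isLinear 0).inter
      (convex_halfSpace_lt (LinearMap.fst ℝ ℝ ℝ + LinearMap.snd ℝ ℝ ℝ).isLinear Real.pi))
  refine ⟨hconv, ?_⟩
  rintro ⟨x1, x2⟩ hx ⟨y1, y2⟩ hy hxy s t hs ht hst
  have hab : y1 - x1 ≠ 0 ∨ y2 - x2 ≠ 0 := by
    by_contra! hc
    apply hxy
    ext
    · simp only; linarith [hc.1]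
    · simp only; linarith [hc.2]
  have hseg := segment_concave x1 x2 (y1 - x1) (y2 - x2) hab (by
    intro u hu
    have := hconv hx hy (a := 1 - u) (b := u) (by linarith [hu.2]) hu.1 (by ring)
    simp only [Set.mem_setOf_eq, Prod.smul_mk, Prod.mk_add_mk, smul_eq_mul] at this
    obtain ⟨h1, h2, h3⟩ := this
    exact ⟨by linarith, by linarith, by linarith⟩)
  have := hseg.2 (x := 0) (y := 1) (by simp) (by simp) (by norm_num) hs ht hst
  have hs' : s = 1 - t := by linarith
  subst hs'
  simp only [smul_eq_mul, Prod.smul_mk, Prod.mk_add_mk] at this ⊢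
  convert this using 1 <;> ring_nf
end

section
/- For every β ∈ (0, π), the function α ↦ Λ(α) + Λ(β) + Λ(π − α − β) tends to 0 as α tends to 0 from the right. (This is the vanishing part of Corollary 2.9: the volume of the ideal hyperbolic simplex vanishes when one of its dihedral angles goes to 0.) -/
theorem lob_int (a b : ℝ) : IntervalIntegrable (fun u => Real.log |2 * Real.sin u|) MeasureTheory.volume a b := by
  have h : MeromorphicOn (fun u : ℝ => 2 * Real.sin u) (Set.uIcc a b) := by
    intro x _
    apply AnalyticAt.meromorphicAt
    fun_prop
  exact h.intervalIntegrable_log_norm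

theorem lob_pi : ∫ u in (0:ℝ)..Real.pi, Real.log |2 * Real.sin u| = 0 := by
  have h : ∫ u in (0:ℝ)..Real.pi, Real.log |2 * Real.sin u|
      = ∫ u in (0:ℝ)..Real.pi, (Real.log 2 + Real.log (Real.sin u)) := by
    rw [intervalIntegral.integral_of_le Real.pi_pos.le, intervalIntegral.integral_of_le Real.pi_pos.le,
      MeasureTheory.integral_Ioc_eq_integral_Ioo, MeasureTheory.integral_Ioc_eq_integral_Ioo]
    apply MeasureTheory.setIntegral_congr_fun measurableSet_Ioo
    intro u hu
    have := Real.sin_pos_of_mem_Ioo hu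
    simp only [Real.log_abs]
    rw [Real.log_mul two_ne_zero this.ne']
  have h2 : IntervalIntegrable (fun u => Real.log (Real.sin u)) MeasureTheory.volume 0 Real.pi :=
    intervalIntegrable_log_sin
  rw [h, intervalIntegral.integral_add (by simp) h2, integral_log_sin_zero_pi]
  simp
  ring

theorem lob_cont : Continuous lobachevsky :=
  (intervalIntegral.continuous_primitive lob_int 0).neg

theorem lob_refl (β : ℝ) : lobachevsky (Real.pi - β) = - lobachevsky β := by
  unfold lobachevsky
  have h := intervalIntegral.integral_comp_sub_left (a := β) (b := Real.pi)
    (fun u => Real.log |2 * Real.sin u|) Real.pi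
  simp only [Real.sin_pi_sub, sub_self] at h
  have h2 := intervalIntegral.integral_add_adjacent_intervals (lob_int 0 β) (lob_int β Real.pi)
  rw [lob_pi] at h2
  linarith

/-- For every `β ∈ (0, π)`, the volume `Λ(α) + Λ(β) + Λ(π - α - β)` of the ideal
hyperbolic simplex tends to `0` as `α → 0⁺`. -/
theorem volume_tendsto_zero (β : ℝ) (hβ : β ∈ Set.Ioo 0 Real.pi) :
    Filter.Tendsto
      (fun α : ℝ => lobachevsky α + lobachevsky β + lobachevsky (Real.pi - α - β))
      (nhdsWithin 0 (Set.Ioi 0)) (nhds 0) := by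
  have hc : Continuous (fun α : ℝ => lobachevsky α + lobachevsky β + lobachevsky (Real.pi - α - β)) := by
    have := lob_cont
    fun_prop
  have h := (hc.tendsto 0).mono_left (nhdsWithin_le_nhds (s := Set.Ioi 0))
  have h0 : lobachevsky 0 = 0 := by simp [lobachevsky]
  simpa [h0, lob_refl] using h
end

section
/- For all α > 0 and β > 0 with α + β < π, one has Λ(α) + Λ(β) + Λ(π − α − β) ≤ 3·Λ(π/3), i.e. among all ideal hyperbolic simplices the regular ideal simplex (all dihedral angles equal to π/3) has maximal volume. -/
open Real in
theorem lob_hasDerivAt_s2 (x : ℝ) (h0 : 0 < x) (h1 : x < π) :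
    HasDerivAt lobachevsky (-log |2 * sin x|) x := by
  have hs : 0 < sin x := sin_pos_of_pos_of_lt_pi h0 h1
  have hint : IntervalIntegrable (fun u : ℝ => log |2 * sin u|) MeasureTheory.volume 0 x := by
    have hm : MeromorphicOn (fun u : ℝ => 2 * sin u) (Set.uIcc 0 x) := by
      intro y _
      have : AnalyticAt ℝ (fun u : ℝ => 2 * sin u) y := by fun_prop
      exact this.meromorphicAt
    exact hm.intervalIntegrable_log_norm
  have hc : ContinuousAt (fun u : ℝ => log |2 * sin u|) x := by
    apply ContinuousAt.log
    · fun_prop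
    · positivity
  have hmeas : StronglyMeasurableAtFilter (fun u : ℝ => log |2 * sin u|) (nhds x) := by
    apply Measurable.stronglyMeasurable _ |>.stronglyMeasurableAtFilter
    fun_prop
  exact (intervalIntegral.integral_hasDerivAt_right hint hmeas hc).neg

open Real in
theorem lob_log_le {x y : ℝ} (hx0 : 0 < x) (hxp : x < π) (hy0 : 0 < y) (hyp : y < π)
    (h : sin x ≤ sin y) : log |2 * sin x| ≤ log |2 * sin y| := by
  have hx := sin_pos_of_pos_of_lt_pi hx0 hxp
  have hy := sin_pos_of_pos_of_lt_pi hy0 hyp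
  rw [abs_of_pos (by positivity), abs_of_pos (by positivity)]
  exact log_le_log (by positivity) (by linarith)

open Real in
theorem lob_step1 (m t : ℝ) (ht : 0 ≤ t) (htm : t < m) (hm : m < π / 2) :
    lobachevsky (m - t) + lobachevsky (m + t) ≤ 2 * lobachevsky m := by
  have hd : ∀ u ∈ Set.Icc 0 t, HasDerivAt (fun u => lobachevsky (m - u) + lobachevsky (m + u))
      (log |2 * sin (m - u)| - log |2 * sin (m + u)|) u := by
    intro u hu
    obtain ⟨h0, h1⟩ := hu
    have a := (lob_hasDerivAt_s2 (m - u) (by linarith) (by linarith)).comp u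
      ((hasDerivAt_id u).const_sub m)
    have b := (lob_hasDerivAt_s2 (m + u) (by linarith) (by linarith)).comp u
      ((hasDerivAt_id u).const_add m)
    refine (a.add b).congr_deriv ?_
    ring
  have key : AntitoneOn (fun u => lobachevsky (m - u) + lobachevsky (m + u)) (Set.Icc 0 t) := by
    apply antitoneOn_of_deriv_nonpos (convex_Icc 0 t)
    · exact fun u hu => (hd u hu).continuousAt.continuousWithinAt
    · exact fun u hu => (hd u (interior_subset hu)).differentiableAt.differentiableWithinAt
    · intro u hu
      have hu := interior_subset hu
      rw [(hd u hu).deriv]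
      obtain ⟨h0, h1⟩ := hu
      have := lob_log_le (x := m - u) (y := m + u) (by linarith) (by linarith) (by linarith)
        (by linarith) (by
          rw [sin_sub, sin_add]
          have h2 : 0 ≤ cos m := cos_nonneg_of_neg_pi_div_two_le_of_le (by linarith) (by linarith)
          have h3 : 0 ≤ sin u := sin_nonneg_of_nonneg_of_le_pi h0 (by linarith)
          nlinarith [mul_nonneg h2 h3])
      linarith
  have := key (Set.left_mem_Icc.2 ht) (Set.right_mem_Icc.2 ht) ht
  simp only [sub_zero, add_zero] at this
  linarith

open Real in
theorem lob_step2 (x : ℝ) (hx : 0 < x) (hx2 : x < π / 2) :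
    2 * lobachevsky x + lobachevsky (π - 2 * x) ≤ 3 * lobachevsky (π / 3) := by
  have hp := pi_pos
  have hd : ∀ u, 0 < u → u < π / 2 → HasDerivAt (fun u => 2 * lobachevsky u + lobachevsky (π - 2 * u))
      (2 * (log |2 * sin (2 * u)| - log |2 * sin u|)) u := by
    intro u h0 h1
    have a := (lob_hasDerivAt_s2 u h0 (by linarith)).const_mul 2
    have b := (lob_hasDerivAt_s2 (π - 2 * u) (by linarith) (by linarith)).comp u
      (((hasDerivAt_id u).const_mul 2).const_sub π)
    refine (a.add b).congr_deriv ?_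
    rw [sin_pi_sub]
    ring
  have e : 2 * lobachevsky (π / 3) + lobachevsky (π - 2 * (π / 3)) = 3 * lobachevsky (π / 3) := by
    rw [show π - 2 * (π / 3) = π / 3 by ring]; ring
  have hc3 := cos_pi_div_three
  rcases le_total x (π / 3) with h | h
  · have key : MonotoneOn (fun u => 2 * lobachevsky u + lobachevsky (π - 2 * u))
        (Set.Icc x (π / 3)) := by
      have hd' : ∀ u ∈ Set.Icc x (π / 3), _ := fun u hu => hd u (by linarith [hu.1]) (by linarith [hu.2])
      apply monotoneOn_of_deriv_nonneg (convex_Icc _ _)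
      · exact fun u hu => (hd' u hu).continuousAt.continuousWithinAt
      · exact fun u hu => (hd' u (interior_subset hu)).differentiableAt.differentiableWithinAt
      · intro u hu
        have hu := interior_subset hu
        rw [(hd' u hu).deriv]
        obtain ⟨h0, h1⟩ := hu
        have := lob_log_le (x := u) (y := 2 * u) (by linarith) (by linarith) (by linarith)
          (by linarith) (by
            rw [sin_two_mul]
            have h2 : cos (π / 3) ≤ cos u := cos_le_cos_of_nonneg_of_le_pi (by linarith) (by linarith) h1
            have h3 : 0 ≤ sin u := sin_nonneg_of_nonneg_of_le_pi (by linarith) (by linarith)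
            nlinarith)
        linarith
    have := key (Set.left_mem_Icc.2 h) (Set.right_mem_Icc.2 h) h
    simp only at this
    linarith
  · have key : AntitoneOn (fun u => 2 * lobachevsky u + lobachevsky (π - 2 * u))
        (Set.Icc (π / 3) x) := by
      have hd' : ∀ u ∈ Set.Icc (π / 3) x, _ := fun u hu => hd u (by linarith [hu.1]) (by linarith [hu.2])
      apply antitoneOn_of_deriv_nonpos (convex_Icc _ _)
      · exact fun u hu => (hd' u hu).continuousAt.continuousWithinAt
      · exact fun u hu => (hd' u (interior_subset hu)).differentiableAt.differentiableWithinAt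
      · intro u hu
        have hu := interior_subset hu
        rw [(hd' u hu).deriv]
        obtain ⟨h0, h1⟩ := hu
        have := lob_log_le (x := 2 * u) (y := u) (by linarith) (by linarith) (by linarith)
          (by linarith) (by
            rw [sin_two_mul]
            have h2 : cos u ≤ cos (π / 3) := cos_le_cos_of_nonneg_of_le_pi (by linarith) (by linarith) h0
            have h3 : 0 ≤ sin u := sin_nonneg_of_nonneg_of_le_pi (by linarith) (by linarith)
            nlinarith)
        linarith
    have := key (Set.left_mem_Icc.2 h) (Set.right_mem_Icc.2 h) h
    simp only at this
    linarith

/-- Among all ideal hyperbolic simplices, the regular ideal simplex (all dihedral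
angles equal to `π/3`) has maximal volume:
`Λ(α) + Λ(β) + Λ(π - α - β) ≤ 3 Λ(π/3)` for `α, β > 0` with `α + β < π`. -/
theorem volume_le_regular (α β : ℝ) (hα : 0 < α) (hβ : 0 < β)
    (hαβ : α + β < Real.pi) :
    lobachevsky α + lobachevsky β + lobachevsky (Real.pi - α - β) ≤
      3 * lobachevsky (Real.pi / 3) := by
  have h2 := lob_step2 ((α + β) / 2) (by linarith) (by linarith)
  rw [show Real.pi - 2 * ((α + β) / 2) = Real.pi - α - β by ring] at h2
  rcases le_total α β with h | h
  · have h1 := lob_step1 ((α + β) / 2) ((β - α) / 2) (by linarith) (by linarith) (by linarith)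
    rw [show (α + β) / 2 - (β - α) / 2 = α by ring,
      show (α + β) / 2 + (β - α) / 2 = β by ring] at h1
    linarith
  · have h1 := lob_step1 ((α + β) / 2) ((α - β) / 2) (by linarith) (by linarith) (by linarith)
    rw [show (α + β) / 2 - (α - β) / 2 = β by ring,
      show (α + β) / 2 + (α - β) / 2 = α by ring] at h1
    linarith
end

section
/- For any L > 0 and u₀ > 0, there exists c > 0 (depending only on L and u₀) with the following property. Let N ∈ ℕ, let x₁ < x₂ < ⋯ < x_N be points of (0, L), and let u : [0, L] → ℝ be a continuous function such that: (i) u(s) ≥ u₀ for all s ∈ [0, L]; (ii) u is twice continuously differentiable on [0, L] ∖ {x₁, …, x_N} and satisfies u''(s) = −u(s) there; (iii) at each x_i the one-sided limits u'(x_i⁻) and u'(x_i⁺) of the derivative exist and satisfy u'(x_i⁺) > u'(x_i⁻) (a positive jump in the derivative). Then ∫₀^L √( 1/u(s)² + u'(s)²/(u(s)²·(1 + u(s)²)) ) ds ≤ c. (Proposition 4.12 of the paper.) -/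
open Set Filter

open Topology in
lemma mono_aux (L : ℝ) (M D : ℝ → ℝ) (S : Finset ℝ)
    (hd : ∀ s ∈ Ioo 0 L, s ∉ S → HasDerivAt M (D s) s)
    (hD : ∀ s ∈ Ioo 0 L, s ∉ S → 0 ≤ D s)
    (hl : ∀ s ∈ Ioc 0 L, Tendsto M (𝓝[<] s) (𝓝 (M s)))
    (hr : ∀ s ∈ Ico 0 L, ∃ r, M s ≤ r ∧ Tendsto M (𝓝[>] s) (𝓝 r)) :
    ∀ (n : ℕ) (a b : ℝ), (S.filter (fun y => y ∈ Ioo a b)).card ≤ n → 0 ≤ a → a ≤ b → b ≤ L →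
      MonotoneOn M (Icc a b) := by
  intro n
  induction n with
  | zero =>
    intro a b hn ha hab hb
    have hS : ∀ s ∈ Ioo a b, s ∉ S := by
      intro s hs hsS
      have : s ∈ S.filter (fun y => y ∈ Ioo a b) := by
        rw [Finset.mem_filter]; exact ⟨hsS, hs⟩
      rw [Finset.card_eq_zero.mp (Nat.le_zero.mp hn)] at this
      simp at this
    have hsub : ∀ s ∈ Ioo a b, s ∈ Ioo 0 L := fun s hs =>
      ⟨lt_of_le_of_lt ha hs.1, lt_of_lt_of_le hs.2 hb⟩
    have hm : MonotoneOn M (Ioo a b) := by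
      apply monotoneOn_of_deriv_nonneg (convex_Ioo a b)
      · intro s hs
        exact (hd s (hsub s hs) (hS s hs)).continuousAt.continuousWithinAt
      · rw [interior_Ioo]
        intro s hs
        exact (hd s (hsub s hs) (hS s hs)).differentiableAt.differentiableWithinAt
      · rw [interior_Ioo]
        intro s hs
        rw [(hd s (hsub s hs) (hS s hs)).deriv]
        exact hD s (hsub s hs) (hS s hs)
    have hB : ∀ y ∈ Ioo a b, M y ≤ M b := by
      intro y hy
      refine ge_of_tendsto (hl b ⟨by linarith [hy.1, hy.2], hb⟩) ?_
      filter_upwards [Ioo_mem_nhdsLT hy.2] with z hz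
      exact hm hy ⟨hy.1.trans hz.1, hz.2⟩ hz.1.le
    have hA : ∀ y ∈ Ioo a b, M a ≤ M y := by
      intro y hy
      obtain ⟨r, hr1, hr2⟩ := hr a ⟨ha, by linarith [hy.1, hy.2]⟩
      refine hr1.trans (le_of_tendsto hr2 ?_)
      filter_upwards [Ioo_mem_nhdsGT hy.1] with z hz
      exact hm ⟨hz.1, hz.2.trans hy.2⟩ hy hz.2.le
    intro y hy z hz hyz
    rcases eq_or_lt_of_le hyz with rfl | hlt
    · exact le_rfl
    rcases eq_or_lt_of_le hy.1 with rfl | hay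
    · rcases eq_or_lt_of_le hz.2 with rfl | hzb
      · have hmid : (a + z) / 2 ∈ Ioo a z := ⟨by linarith, by linarith⟩
        exact (hA _ hmid).trans (hB _ hmid)
      · exact hA _ ⟨hlt, hzb⟩
    · rcases eq_or_lt_of_le hz.2 with rfl | hzb
      · exact hB _ ⟨hay, hlt⟩
      · exact hm ⟨hay, hlt.trans hzb⟩ ⟨hay.trans hlt, hzb⟩ hyz
  | succ n ih =>
    intro a b hn ha hab hb
    by_cases hne : (S.filter (fun y => y ∈ Ioo a b)).Nonempty
    · obtain ⟨q, hq⟩ := hne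
      have hq' := (Finset.mem_filter.mp hq).2
      have key : ∀ a' b', a ≤ a' → b' ≤ b → q ∉ Ioo a' b' →
          (S.filter (fun y => y ∈ Ioo a' b')).card ≤ n := by
        intro a' b' h1 h2 h3
        have : (S.filter (fun y => y ∈ Ioo a' b')) ⊂ (S.filter (fun y => y ∈ Ioo a b)) := by
          rw [Finset.ssubset_iff_of_subset]
          · exact ⟨q, hq, fun h => h3 (Finset.mem_filter.mp h).2⟩
          · intro y hy
            rw [Finset.mem_filter] at hy ⊢
            exact ⟨hy.1, lt_of_le_of_lt h1 hy.2.1, lt_of_lt_of_le hy.2.2 h2⟩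
        have := Finset.card_lt_card this
        omega
      have h1 := ih a q (key a q le_rfl hq'.2.le (fun h => lt_irrefl _ h.2)) ha hq'.1.le
        (hq'.2.le.trans hb)
      have h2 := ih q b (key q b hq'.1.le le_rfl (fun h => lt_irrefl _ h.1))
        (ha.trans hq'.1.le) hq'.2.le hb
      have h3 := h1.union_right h2 (isGreatest_Icc hq'.1.le) (isLeast_Icc hq'.2.le)
      rwa [Icc_union_Icc_eq_Icc hq'.1.le hq'.2.le] at h3
    · rw [Finset.not_nonempty_iff_eq_empty] at hne
      exact ih a b (by rw [hne]; simp) ha hab hb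

noncomputable def Psi (C K v p s : ℝ) : ℝ :=
  C * (Real.arctan (p / v) + s) - Real.sin (Real.arctan (p / v)) * Real.arsinh (1 / v) + K * s

lemma Psi_mono (C K v s a b : ℝ) (hv : 0 < v) (hC : Real.arsinh (1 / v) ≤ C) (hab : a < b) :
    Psi C K v a s ≤ Psi C K v b s := by
  unfold Psi
  have h1 : Real.arctan (a / v) < Real.arctan (b / v) :=
    Real.arctan_strictMono (by gcongr)
  have h0 : 0 ≤ Real.arsinh (1 / v) := by rw [Real.arsinh_nonneg_iff]; positivity
  have h2 : Real.sin (Real.arctan (b / v)) - Real.sin (Real.arctan (a / v))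
      ≤ Real.arctan (b / v) - Real.arctan (a / v) := by
    have := Real.lipschitzWith_sin.dist_le_mul (Real.arctan (b / v)) (Real.arctan (a / v))
    rw [Real.dist_eq, Real.dist_eq, abs_of_pos (sub_pos.mpr h1)] at this
    simpa using (le_abs_self _).trans this
  nlinarith [mul_le_mul_of_nonneg_right h2 h0, mul_le_mul_of_nonneg_right hC (sub_pos.mpr h1).le]

lemma Psi_deriv (C K s : ℝ) (u p : ℝ → ℝ) (hv : 0 < u s) (hu : HasDerivAt u (p s) s)
    (hp : HasDerivAt p (-(u s)) s) :
    HasDerivAt (fun t => Psi C K (u t) (p t) t)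
      (Real.cos (Real.arctan (p s / u s)) * Real.arsinh (1 / u s)
        + Real.sin (Real.arctan (p s / u s)) * (p s / u s / Real.sqrt (1 + u s ^ 2)) + K) s := by
  have hW : HasDerivAt (fun t => Real.arctan (p t / u t)) (-1) s := by
    convert (hp.fun_div hu hv.ne').arctan using 1
    field_simp
    ring
  have hA : HasDerivAt (fun t => Real.arsinh (1 / u t))
      (-(p s / u s / Real.sqrt (1 + u s ^ 2))) s := by
    have h1 : HasDerivAt (fun t => 1 / u t) (-(p s) / u s ^ 2) s := by
      simpa only [one_div] using hu.fun_inv hv.ne'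
    convert h1.arsinh using 1
    have : Real.sqrt (1 + (1 / u s) ^ 2) = Real.sqrt (1 + u s ^ 2) / u s := by
      rw [Real.sqrt_eq_iff_mul_self_eq (by positivity) (by positivity)]
      have := Real.mul_self_sqrt (show 0 ≤ 1 + u s ^ 2 by positivity)
      field_simp
      nlinarith
    have hq : 0 < Real.sqrt (1 + u s ^ 2) := by positivity
    rw [this, smul_eq_mul]
    field_simp
  have := (((hW.fun_add (hasDerivAt_id' s)).const_mul C).fun_sub (hW.sin.fun_mul hA)).fun_add
    ((hasDerivAt_id' s).const_mul K)
  unfold Psi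
  refine this.congr_deriv ?_
  ring

lemma integrand_le (u₀ v p : ℝ) (hu₀ : 0 < u₀) (hv : u₀ ≤ v) :
    Real.sqrt (1 / v ^ 2 + p ^ 2 / (v ^ 2 * (1 + v ^ 2))) ≤
      Real.cos (Real.arctan (p / v)) * Real.arsinh (1 / v)
        + Real.sin (Real.arctan (p / v)) * (p / v / Real.sqrt (1 + v ^ 2)) + (1 + 1 / u₀) := by
  have hv0 : 0 < v := hu₀.trans_le hv
  have h0 : 0 ≤ Real.cos (Real.arctan (p / v)) * Real.arsinh (1 / v) := by
    apply mul_nonneg (Real.cos_arctan_pos _).le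
    rw [Real.arsinh_nonneg_iff]; positivity
  have h1 : 1 / v ≤ 1 / u₀ := by gcongr
  set q := Real.sqrt (1 + v ^ 2) with hq
  have hq1 : 1 ≤ q := by rw [hq]; apply Real.le_sqrt_of_sq_le; nlinarith
  have hqq : q ^ 2 = 1 + v ^ 2 := Real.sq_sqrt (by positivity)
  have h2 : Real.sqrt (1 / v ^ 2 + p ^ 2 / (v ^ 2 * (1 + v ^ 2))) ≤ 1 / v + |p / v| / q := by
    apply Real.sqrt_le_iff.mpr
    refine ⟨by positivity, ?_⟩
    have : (1 / v + |p / v| / q) ^ 2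
        = 1 / v ^ 2 + p ^ 2 / (v ^ 2 * (1 + v ^ 2)) + 2 * (1 / v) * (|p / v| / q) := by
      rw [← hqq, add_sq, div_pow |p / v|, sq_abs]
      field_simp
      ring
    rw [this]
    have : 0 ≤ 2 * (1 / v) * (|p / v| / q) := by positivity
    linarith
  set w := p / v
  have h3 : |w| - Real.sin (Real.arctan w) * w ≤ 1 := by
    rw [Real.sin_arctan]
    set r := Real.sqrt (1 + w ^ 2) with hr
    have hr0 : 0 < r := by positivity
    have hrr : r ^ 2 = 1 + w ^ 2 := Real.sq_sqrt (by positivity)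
    have e : |w| - w / r * w = |w| * (r - |w|) / r := by
      field_simp
      rw [mul_sub, ← sq, sq_abs]
    rw [e, div_le_one hr0]
    have ha := abs_nonneg w
    have haa := sq_abs w
    have : |w| ≤ r := by nlinarith
    have : r - |w| ≤ 1 := by nlinarith
    nlinarith
  have h4 : |w| / q - Real.sin (Real.arctan w) * (w / q) ≤ 1 := by
    have : |w| / q - Real.sin (Real.arctan w) * (w / q)
      = (|w| - Real.sin (Real.arctan w) * w) / q := by ring
    rw [this, div_le_one (by linarith)]
    linarith
  linarith

lemma Psi_tendsto (C K s v p : ℝ) (u f : ℝ → ℝ) (l : Filter ℝ) (hv : 0 < v)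
    (hs : Tendsto (fun t : ℝ => t) l (nhds s))
    (hu : Tendsto u l (nhds v)) (hf : Tendsto f l (nhds p)) :
    Tendsto (fun t => Psi C K (u t) (f t) t) l (nhds (Psi C K v p s)) := by
  unfold Psi
  have hW := (Real.continuous_arctan.tendsto _).comp (hf.div hu hv.ne')
  have hA := (Real.continuous_arsinh.tendsto _).comp
    ((tendsto_const_nhds (x := (1:ℝ))).div hu hv.ne')
  have hS := (Real.continuous_sin.tendsto _).comp hW
  exact (((hW.add hs).const_mul C).sub (hS.mul hA)).add (hs.const_mul K)

lemma Psi_bound (C K v p s : ℝ) (hv : 0 < v) (hC : Real.arsinh (1 / v) ≤ C) :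
    |Psi C K v p s - (C + K) * s| ≤ C * 2 + C := by
  unfold Psi
  have h0 : 0 ≤ Real.arsinh (1 / v) := by rw [Real.arsinh_nonneg_iff]; positivity
  have h1 := Real.arctan_lt_pi_div_two (p / v)
  have h2 := Real.neg_pi_div_two_lt_arctan (p / v)
  have h3 := Real.pi_le_four
  have h4 := Real.sin_le_one (Real.arctan (p / v))
  have h5 := Real.neg_one_le_sin (Real.arctan (p / v))
  have h6 : 0 ≤ C := h0.trans hC
  have a1 : C * Real.arctan (p / v) ≤ C * 2 := by gcongr; linarith
  have a2 : C * (-2) ≤ C * Real.arctan (p / v) := by gcongr; linarith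
  rw [abs_le]
  constructor <;> nlinarith

/-- Proposition 4.12: for any `L > 0` and `u₀ > 0` there is a constant `c > 0` such that
for any continuous `u : [0, L] → ℝ` bounded below by `u₀`, twice continuously
differentiable away from finitely many points `x₁ < ⋯ < x_N` of `(0, L)` with
`u'' = -u` there, and whose derivative has a positive jump at each `xᵢ`, one has
`∫₀^L √(1/u² + u'²/(u²(1+u²))) ≤ c`. -/
theorem integral_bound_of_jump_ode (L u₀ : ℝ) (hL : 0 < L) (hu₀ : 0 < u₀) :
    ∃ c > 0, ∀ (N : ℕ) (x : Fin N → ℝ), StrictMono x → (∀ i, x i ∈ Set.Ioo 0 L) →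
      ∀ u u' : ℝ → ℝ,
        ContinuousOn u (Set.Icc 0 L) →
        (∀ s ∈ Set.Icc 0 L, u₀ ≤ u s) →
        (∀ s ∈ Set.Icc 0 L \ Set.range x,
          HasDerivWithinAt u (u' s) (Set.Icc 0 L) s) →
        ContinuousOn u' (Set.Icc 0 L \ Set.range x) →
        (∀ s ∈ Set.Icc 0 L \ Set.range x,
          HasDerivWithinAt u' (-(u s)) (Set.Icc 0 L) s) →
        (∀ i : Fin N, ∃ a b : ℝ,
          Tendsto u' (nhdsWithin (x i) (Set.Iio (x i))) (nhds a) ∧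
          Tendsto u' (nhdsWithin (x i) (Set.Ioi (x i))) (nhds b) ∧
          a < b) →
        (∫ s in (0:ℝ)..L,
            Real.sqrt (1 / (u s) ^ 2 + (u' s) ^ 2 / ((u s) ^ 2 * (1 + (u s) ^ 2)))) ≤ c := by
  have hC0 : 0 < Real.arsinh (1 / u₀) := by rw [Real.arsinh_pos_iff]; positivity
  set C := Real.arsinh (1 / u₀) with hCdef
  set K := 1 + 1 / u₀ with hKdef
  have hK0 : 0 < K := by positivity
  refine ⟨6 * C + (C + K) * L, by positivity, ?_⟩
  intro N x hx hxI u u' huc hul hud hu'c hu'd hj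
  choose a b hja hjb hjab using hj
  classical
  let p : ℝ → ℝ := fun s => if h : s ∈ range x then a h.choose else u' s
  have hpi : ∀ i, p (x i) = a i := by
    intro i
    have h : x i ∈ range x := ⟨i, rfl⟩
    simp only [p, dif_pos h]
    rw [hx.injective h.choose_spec]
  have hpn : ∀ s, s ∉ range x → p s = u' s := fun s hs => by simp only [p, dif_neg hs]
  have hfin : (range x).Finite := finite_range x
  have hev : ∀ s, ∀ᶠ t in nhdsWithin s {s}ᶜ, p t = u' t := by
    intro s
    have h1 : (range x \ {s})ᶜ ∈ nhds s :=
      (hfin.subset sdiff_subset).isClosed.isOpen_compl.mem_nhds (by simp)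
    filter_upwards [mem_nhdsWithin_of_mem_nhds h1, self_mem_nhdsWithin] with t h2 h3
    apply hpn
    intro h4
    exact h2 ⟨h4, h3⟩
  have hevl : ∀ s, u' =ᶠ[nhdsWithin s (Iio s)] p := by
    intro s
    have := (hev s).filter_mono (nhdsWithin_mono s (s := Iio s) (fun t ht => ne_of_lt ht))
    filter_upwards [this] with t ht using ht.symm
  have hevr : ∀ s, u' =ᶠ[nhdsWithin s (Ioi s)] p := by
    intro s
    have := (hev s).filter_mono (nhdsWithin_mono s (s := Ioi s) (fun t ht => ne_of_gt ht))
    filter_upwards [this] with t ht using ht.symm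
  have hpos : ∀ s ∈ Icc 0 L, 0 < u s := fun s hs => hu₀.trans_le (hul s hs)
  have hAC : ∀ s ∈ Icc 0 L, Real.arsinh (1 / u s) ≤ C := by
    intro s hs
    rw [hCdef, Real.arsinh_le_arsinh]
    exact one_div_le_one_div_of_le hu₀ (hul s hs)
  let M : ℝ → ℝ := fun t => Psi C K (u t) (p t) t
  let D : ℝ → ℝ := fun s => Real.cos (Real.arctan (p s / u s)) * Real.arsinh (1 / u s)
        + Real.sin (Real.arctan (p s / u s)) * (p s / u s / Real.sqrt (1 + u s ^ 2)) + K
  have hMd : ∀ s ∈ Ioo 0 L, s ∉ hfin.toFinset → HasDerivAt M (D s) s := by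
    intro s hs hsS
    rw [Set.Finite.mem_toFinset] at hsS
    have hn : Icc 0 L ∈ nhds s := Icc_mem_nhds hs.1 hs.2
    have hs' : s ∈ Icc 0 L := Ioo_subset_Icc_self hs
    apply Psi_deriv C K s u p (hpos s hs')
    · rw [hpn s hsS]; exact (hud s ⟨hs', hsS⟩).hasDerivAt hn
    · refine ((hu'd s ⟨hs', hsS⟩).hasDerivAt hn).congr_of_eventuallyEq ?_
      have h1 : (range x)ᶜ ∈ nhds s := hfin.isClosed.isOpen_compl.mem_nhds hsS
      filter_upwards [h1] with t ht using hpn t ht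
  have hgD : ∀ s ∈ Ioo 0 L, s ∉ hfin.toFinset →
      Real.sqrt (1 / (u s) ^ 2 + (u' s) ^ 2 / ((u s) ^ 2 * (1 + (u s) ^ 2))) ≤ D s := by
    intro s hs hsS
    rw [Set.Finite.mem_toFinset] at hsS
    rw [← hpn s hsS]
    exact integrand_le u₀ (u s) (p s) hu₀ (hul s (Ioo_subset_Icc_self hs))
  have hl : ∀ s ∈ Ioc 0 L, Tendsto M (nhdsWithin s (Iio s)) (nhds (M s)) := by
    intro s hs
    have hs' : s ∈ Icc 0 L := Ioc_subset_Icc_self hs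
    have hle : nhdsWithin s (Iio s) ≤ nhdsWithin s (Icc 0 L) :=
      nhdsWithin_le_iff.mpr (Icc_mem_nhdsLT_of_mem hs)
    apply Psi_tendsto C K s (u s) (p s) u p _ (hpos s hs')
      (tendsto_id.mono_left nhdsWithin_le_nhds) ((huc s hs').mono_left hle)
    refine Tendsto.congr' (hevl s) ?_
    by_cases hsS : s ∈ range x
    · obtain ⟨i, rfl⟩ := hsS
      rw [hpi]; exact hja i
    · rw [hpn s hsS]
      exact (hu'd s ⟨hs', hsS⟩).continuousWithinAt.mono_left hle
  have hr : ∀ s ∈ Ico 0 L, ∃ r, M s ≤ r ∧ Tendsto M (nhdsWithin s (Ioi s)) (nhds r) := by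
    intro s hs
    have hs' : s ∈ Icc 0 L := Ico_subset_Icc_self hs
    have hle : nhdsWithin s (Ioi s) ≤ nhdsWithin s (Icc 0 L) :=
      nhdsWithin_le_iff.mpr (Icc_mem_nhdsGT_of_mem hs)
    have key : ∀ y, Tendsto u' (nhdsWithin s (Ioi s)) (nhds y) →
        Tendsto M (nhdsWithin s (Ioi s)) (nhds (Psi C K (u s) y s)) := by
      intro y hy
      exact Psi_tendsto C K s (u s) y u p _ (hpos s hs')
        (tendsto_id.mono_left nhdsWithin_le_nhds) ((huc s hs').mono_left hle)
        (Tendsto.congr' (hevr s) hy)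
    by_cases hsS : s ∈ range x
    · obtain ⟨i, rfl⟩ := hsS
      refine ⟨_, ?_, key _ (hjb i)⟩
      simp only [M, hpi]
      exact Psi_mono C K _ _ _ _ (hpos _ hs') (hAC _ hs') (hjab i)
    · refine ⟨_, ?_, key _ ((hu'd s ⟨hs', hsS⟩).continuousWithinAt.mono_left hle)⟩
      simp only [M, hpn s hsS]
      exact le_rfl
  have hmono : MonotoneOn M (Icc 0 L) :=
    mono_aux L M D hfin.toFinset hMd
      (fun s hs hsS => (Real.sqrt_nonneg _).trans (hgD s hs hsS)) hl hr _ 0 L le_rfl le_rfl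
      hL.le le_rfl
  have hmono' : MonotoneOn M (uIcc 0 L) := by rwa [uIcc_of_le hL.le]
  have hML : M 0 ≤ M L := hmono ⟨le_rfl, hL.le⟩ ⟨hL.le, le_rfl⟩ hL.le
  have hint := hmono'.intervalIntegral_deriv_mem_uIcc
  rw [uIcc_of_le (by linarith)] at hint
  have hb0 := abs_le.mp (Psi_bound C K (u 0) (p 0) 0 (hpos 0 ⟨le_rfl, hL.le⟩) (hAC 0 ⟨le_rfl, hL.le⟩))
  have hbL := abs_le.mp (Psi_bound C K (u L) (p L) L (hpos L ⟨hL.le, le_rfl⟩) (hAC L ⟨hL.le, le_rfl⟩))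
  have hM : M L - M 0 ≤ 6 * C + (C + K) * L := by
    simp only [M]
    linarith [hb0.1, hbL.2]
  refine le_trans ?_ (hint.2.trans hM)
  rw [intervalIntegral.integral_of_le hL.le, intervalIntegral.integral_of_le hL.le]
  apply MeasureTheory.integral_mono_of_nonneg
  · exact Eventually.of_forall fun s => Real.sqrt_nonneg _
  · exact (intervalIntegrable_iff_integrableOn_Ioc_of_le hL.le).mp hmono'.intervalIntegrable_deriv
  · have hz : ∀ᵐ s ∂(MeasureTheory.volume : MeasureTheory.Measure ℝ), s ∉ range x ∪ {L} := by
      rw [MeasureTheory.ae_iff]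
      simp only [not_not]
      exact Set.Finite.measure_zero (hfin.union (finite_singleton L)) MeasureTheory.volume
    filter_upwards [MeasureTheory.ae_restrict_of_ae hz,
      MeasureTheory.ae_restrict_mem measurableSet_Ioc] with s h1 h2
    have h3 : s ∈ Ioo 0 L := ⟨h2.1, lt_of_le_of_ne h2.2 (fun h => h1 (Or.inr h))⟩
    have h4 : s ∉ hfin.toFinset := by
      rw [Set.Finite.mem_toFinset]; exact fun h => h1 (Or.inl h)
    rw [(hMd s h3 h4).deriv]
    exact hgD s h3 h4
end
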